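/- (Theorem 1.) Let γ > 0, γ_α > 0, η > 0, let Σ : ℝ^d → Mat_{d×d}(ℝ) be a field of symmetric matrices (the minibatch gradient-noise covariance) and σ² : ℝ^d → ℝ (the minibatch potential-noise variance), both continuous. Then p = exp(−H_e) is annihilated by the Fokker–Planck operator of the stochastic-approximation dynamics in which the gradient noise η Σ(θ)/2 and potential noise adds diffusion that is exactly compensated by reducing the injected noise: for every (θ,r,α,r_α), −∑_i r_i ∂_{θ_i} p + ∑_i ∂_{r_i}[(∂_{θ_i}U(θ) + γ r_i) p] + (η/2) ∑_{i,j} ∂_{r_i}[Σ_{ij}(θ) ∂_{r_j} p] − r_α ∂_α p + ∂_{r_α}[(γ_α r_α − h(θ,r,α)) p] + (η/2) g′(α) σ²(θ) ∂²_{r_α} p + ∑_i ∂_{r_i}[ (γ/g(α)) ∂_{r_i} p ] − (η/2) ∑_{i,j} ∂_{r_i}[Σ_{ij}(θ) ∂_{r_j} p] + γ_α ∂²_{r_α} p − (η/2) g′(α) σ²(θ) ∂²_{r_α} p = 0. Hence exp(−H_e) is the stationary (unnormalized) density of the stochastic-approximation continuously tempered Langevin dynamics when the noise-variance terms Σ(θ)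 and σ²(θ) are available. -/

import Mathlib

open scoped BigOperators

/-- Partial derivative of `f : (Fin d → ℝ) → ℝ` at `x` in the `i`-th coordinate. -/
noncomputable def pd {d : ℕ} (f : (Fin d → ℝ) → ℝ) (x : Fin d → ℝ) (i : Fin d) : ℝ :=
  deriv (fun s => f (Function.update x i s)) (x i)

/-- The Hamiltonian `H(θ,r) = U(θ) + ‖r‖²/2`. -/
noncomputable def Hfun {d : ℕ} (U : (Fin d → ℝ) → ℝ) (θ r : Fin d → ℝ) : ℝ :=
  U θ + (∑ i, (r i) ^ 2) / 2

/-- The extended Hamiltonian `H_e(θ,r,α,r_α) = g(α)H(θ,r) + φ(α) + r_α²/2`. -/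
noncomputable def Hext {d : ℕ} (U : (Fin d → ℝ) → ℝ) (g φ : ℝ → ℝ)
    (θ r : Fin d → ℝ) (a ra : ℝ) : ℝ :=
  g a * Hfun U θ r + φ a + ra ^ 2 / 2

/-- The coupling function `h(θ,r,α) = −g′(α)H(θ,r) − φ′(α)`. -/
noncomputable def hcpl {d : ℕ} (U : (Fin d → ℝ) → ℝ) (g φ : ℝ → ℝ)
    (θ r : Fin d → ℝ) (a : ℝ) : ℝ :=
  -(deriv g a) * Hfun U θ r - deriv φ a

/-- The unnormalized stationary density `p = exp(−H_e)`. -/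
noncomputable def pdens {d : ℕ} (U : (Fin d → ℝ) → ℝ) (g φ : ℝ → ℝ)
    (θ r : Fin d → ℝ) (a ra : ℝ) : ℝ :=
  Real.exp (-(Hext U g φ θ r a ra))

lemma aux_r {d : ℕ} (U : (Fin d → ℝ) → ℝ) (g φ : ℝ → ℝ) (θ r : Fin d → ℝ) (a ra : ℝ) (i : Fin d) :
    HasDerivAt (fun s => pdens U g φ θ (Function.update r i s) a ra)
      (-(g a * r i) * pdens U g φ θ r a ra) (r i) := by
  have h1 : HasDerivAt (fun s => ∑ k, (Function.update r i s k) ^ 2) (2 * r i) (r i) := by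
    have hk : ∀ k ∈ Finset.univ, HasDerivAt (fun s => (Function.update r i s k) ^ 2)
        (if k = i then 2 * r i else 0) (r i) := by
      intro k _
      by_cases hki : k = i
      · subst hki
        simpa using hasDerivAt_pow 2 (r k)
      · simpa [hki] using hasDerivAt_const (r i) ((r k) ^ 2)
    simpa using HasDerivAt.fun_sum hk
  have h2 := (((((h1.div_const 2).const_add (U θ)).const_mul (g a)).add_const (φ a)).add_const
    (ra ^ 2 / 2)).neg.exp
  unfold pdens Hext Hfun
  refine h2.congr_deriv ?_
  simp only [Function.update_eq_self, Pi.neg_apply]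
  ring

lemma aux_pd_r {d : ℕ} (U : (Fin d → ℝ) → ℝ) (g φ : ℝ → ℝ) (θ r : Fin d → ℝ) (a ra : ℝ)
    (i : Fin d) :
    pd (fun r' => pdens U g φ θ r' a ra) r i = -(g a * r i) * pdens U g φ θ r a ra :=
  (aux_r U g φ θ r a ra i).deriv

lemma aux_lin {d : ℕ} (U : (Fin d → ℝ) → ℝ) (g φ : ℝ → ℝ) (θ r : Fin d → ℝ) (a ra : ℝ)
    (i : Fin d) (c b : ℝ) :
    pd (fun r' => (c + b * r' i) * pdens U g φ θ r' a ra) r i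
      = (b - (c + b * r i) * (g a * r i)) * pdens U g φ θ r a ra := by
  have h := (((hasDerivAt_id (r i)).const_mul b).const_add c).mul (aux_r U g φ θ r a ra i)
  unfold pd
  simp only [Function.update_self]
  refine (h.congr_deriv ?_).deriv
  simp only [Function.update_eq_self, id]
  ring

lemma aux_th {d : ℕ} (U : (Fin d → ℝ) → ℝ) (hU : ContDiff ℝ 1 U) (g φ : ℝ → ℝ)
    (θ r : Fin d → ℝ) (a ra : ℝ) (i : Fin d) :
    pd (fun θ' => pdens U g φ θ' r a ra) θ i = -(g a * pd U θ i) * pdens U g φ θ r a ra := by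
  have h1 : HasDerivAt (fun s => U (Function.update θ i s)) (pd U θ i) (θ i) := by
    apply DifferentiableAt.hasDerivAt
    exact ((hU.differentiable one_ne_zero) _).comp (θ i)
      (hasDerivAt_update θ i (θ i)).differentiableAt
  have h2 := ((((h1.add_const ((∑ i, (r i) ^ 2) / 2)).const_mul (g a)).add_const (φ a)).add_const
    (ra ^ 2 / 2)).neg.exp
  have h3 := h2.deriv
  simp only [Function.update_eq_self, Pi.neg_apply] at h3
  refine h3.trans ?_
  unfold pdens Hext Hfun
  ring

lemma aux_a {d : ℕ} (U : (Fin d → ℝ) → ℝ) (g φ : ℝ → ℝ) (hg : ContDiff ℝ 1 g)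
    (hφ : ContDiff ℝ 1 φ) (θ r : Fin d → ℝ) (a ra : ℝ) :
    deriv (fun s => pdens U g φ θ r s ra) a
      = hcpl U g φ θ r a * pdens U g φ θ r a ra := by
  have h1 := ((hg.differentiable one_ne_zero) a).hasDerivAt
  have h2 := ((hφ.differentiable one_ne_zero) a).hasDerivAt
  have h3 := (((h1.mul_const (Hfun U θ r)).add h2).add_const (ra ^ 2 / 2)).neg.exp
  refine h3.deriv.trans ?_
  simp only [pdens, Hext, hcpl, Pi.neg_apply, Pi.add_apply]
  ring

lemma aux_ra {d : ℕ} (U : (Fin d → ℝ) → ℝ) (g φ : ℝ → ℝ) (θ r : Fin d → ℝ) (a ra : ℝ) :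
    HasDerivAt (fun s => pdens U g φ θ r a s) (-ra * pdens U g φ θ r a ra) ra := by
  have h := ((((hasDerivAt_id ra).pow 2).div_const 2).const_add (g a * Hfun U θ r + φ a)).neg.exp
  refine h.congr_deriv ?_
  simp [pdens, Hext]
  ring

lemma aux_ra_lin {d : ℕ} (U : (Fin d → ℝ) → ℝ) (g φ : ℝ → ℝ) (θ r : Fin d → ℝ) (a ra c b : ℝ) :
    deriv (fun s => (b * s - c) * pdens U g φ θ r a s) ra
      = (b - (b * ra - c) * ra) * pdens U g φ θ r a ra := by
  have h := (((hasDerivAt_id ra).const_mul b).sub_const c).mul (aux_ra U g φ θ r a ra)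
  refine (h.congr_deriv ?_).deriv
  simp only [id]
  ring

lemma aux_ra2 {d : ℕ} (U : (Fin d → ℝ) → ℝ) (g φ : ℝ → ℝ) (θ r : Fin d → ℝ) (a ra : ℝ) :
    deriv (deriv (fun s => pdens U g φ θ r a s)) ra
      = (ra ^ 2 - 1) * pdens U g φ θ r a ra := by
  have h : deriv (fun s => pdens U g φ θ r a s)
      = fun s => ((-1) * s - 0) * pdens U g φ θ r a s := by
    funext s
    rw [(aux_ra U g φ θ r a s).deriv]
    ring
  rw [h, aux_ra_lin]
  ring

lemma aux_rr {d : ℕ} (U : (Fin d → ℝ) → ℝ) (g φ : ℝ → ℝ) (θ r : Fin d → ℝ) (a ra γ : ℝ)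
    (hga : 0 < g a) (i : Fin d) :
    pd (fun r' => (γ / g a) * pd (fun r'' => pdens U g φ θ r'' a ra) r' i) r i
      = (-γ + γ * g a * r i ^ 2) * pdens U g φ θ r a ra := by
  have h : (fun r' => (γ / g a) * pd (fun r'' => pdens U g φ θ r'' a ra) r' i)
      = fun r' => (0 + (-γ) * r' i) * pdens U g φ θ r' a ra := by
    funext r'
    rw [aux_pd_r]
    field_simp
    ring
  rw [h, aux_lin]
  ring

/-- **Theorem 1.** `p = exp(−H_e)` is annihilated by the Fokker–Planck operator of the
stochastic-approximation continuously tempered Langevin dynamics, in which the diffusion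
added by the minibatch gradient noise `η Σ(θ)/2` and potential noise `η g′(α) σ²(θ)/2` is
exactly compensated by reducing the injected noise. Hence `exp(−H_e)` is the stationary
(unnormalized) density of the stochastic-approximation dynamics when the noise-variance
terms `Σ(θ)` and `σ²(θ)` are available. -/
theorem ctld_stochastic_approximation_stationary_density
    {d : ℕ} (hd : 1 ≤ d)
    (U : (Fin d → ℝ) → ℝ) (hU : ContDiff ℝ 1 U)
    (g φ : ℝ → ℝ) (hg : ContDiff ℝ 1 g) (hφ : ContDiff ℝ 1 φ)
    (hgpos : ∀ a : ℝ, 0 < g a)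
    (γ γα η : ℝ) (hγ : 0 < γ) (hγα : 0 < γα) (hη : 0 < η)
    (Sig : (Fin d → ℝ) → Matrix (Fin d) (Fin d) ℝ) (hSigc : Continuous Sig)
    (hSigsymm : ∀ θ, (Sig θ).IsSymm)
    (σ2 : (Fin d → ℝ) → ℝ) (hσ2c : Continuous σ2) :
    ∀ (θ r : Fin d → ℝ) (a ra : ℝ),
      -(∑ i, r i * pd (fun θ' => pdens U g φ θ' r a ra) θ i)
      + (∑ i, pd (fun r' => (pd U θ i + γ * r' i) * pdens U g φ θ r' a ra) r i)
      + (η / 2) * (∑ i, ∑ j,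
          pd (fun r' => Sig θ i j * pd (fun r'' => pdens U g φ θ r'' a ra) r' j) r i)
      - ra * deriv (fun s => pdens U g φ θ r s ra) a
      + deriv (fun s => (γα * s - hcpl U g φ θ r a) * pdens U g φ θ r a s) ra
      + (η / 2) * deriv g a * σ2 θ * deriv (deriv (fun s => pdens U g φ θ r a s)) ra
      + (∑ i, pd (fun r' => (γ / g a) * pd (fun r'' => pdens U g φ θ r'' a ra) r' i) r i)
      - (η / 2) * (∑ i, ∑ j,
          pd (fun r' => Sig θ i j * pd (fun r'' => pdens U g φ θ r'' a ra) r' j) r i)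
      + γα * deriv (deriv (fun s => pdens U g φ θ r a s)) ra
      - (η / 2) * deriv g a * σ2 θ * deriv (deriv (fun s => pdens U g φ θ r a s)) ra
      = 0 := by
  intro θ r a ra
  simp only [aux_rr U g φ θ r a ra γ (hgpos a), aux_lin, aux_th U hU, aux_a U g φ hg hφ,
    aux_ra_lin, aux_ra2]
  have key : -(∑ i, r i * (-(g a * pd U θ i) * pdens U g φ θ r a ra))
      + (∑ i, (γ - (pd U θ i + γ * r i) * (g a * r i)) * pdens U g φ θ r a ra)
      + (∑ i, (-γ + γ * g a * r i ^ 2) * pdens U g φ θ r a ra) = 0 := by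
    rw [← Finset.sum_neg_distrib, ← Finset.sum_add_distrib, ← Finset.sum_add_distrib]
    apply Finset.sum_eq_zero
    intro i _
    ring
  linear_combination key
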